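/- arXiv:2508.03093 — 2 statements merged into one kernel-verified Lean document; each statement's English description precedes it below -/
import Mathlib

section
/- Let G be a d-regular simple graph on n vertices (d > 0) whose uniform random walk matrix has at most r eigenvalues (counted with multiplicity) larger than λ > 0. Let Σ be a finite alphabet and let X = (X₁,…,Xₙ) be a random vector with values in Σⁿ (distributed according to a probability measure μ). Suppose the global correlation is small: (1/n²) · Σ_{u,v ∈ [n]} D_KL( law(Xᵤ, Xᵥ) ‖ law(Xᵤ) ⊗ law(Xᵥ) ) ≤ δ. Then the local correlation satisfies (1/(n·d)) · Σ_{(u,v): u adjacent to v} Σ_{σ∈Σ} ( Pr[Xᵤ = σ ∧ Xᵥ = σ] − Pr[Xᵤ = σ]·Pr[Xᵥ = σ] )² ≤ √(2·r·δ) + λ, where the outer sum is over ordered pairs of adjacent vertices. -/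
/-!
Let `C_σ(u,v)` be the covariance of the indicators of `Xᵤ = σ` and `Xᵥ = σ`, let
`M(u,v) = ∑_σ C_σ(u,v)²`, and let `W = A_G / d`. The local correlation is `⟨W, M⟩ / n`.

* `M` is positive semidefinite (`sq_cov_quadForm_nonneg`): each `C_σ` is a Gram matrix, and so is
  its entrywise square.
* `0 ≤ M(u,v) ≤ 1` (`sum_sq_cov_le_one`), so `tr M ≤ n`.
* `M(u,v) ≤ 2 D_KL(law(Xᵤ,Xᵥ) ‖ law(Xᵤ) ⊗ law(Xᵥ))` (`sum_sq_cov_le_two_mul_klDivFin`), an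
  `ℓ²` form of Pinsker's inequality that follows by summing a scalar inequality
  (`kl_term_lower`). Since `M ≤ 1` entrywise, `‖M‖_F² ≤ ∑ M(u,v) ≤ 2 δ n²`.

Now expand `⟨W, M⟩ = ∑ᵢ λᵢ ⟨bᵢ, M bᵢ⟩` in an orthonormal eigenbasis of `W`, where all `λᵢ ≤ 1`
(`eig_le_one`). The eigenvalues at most `lam` contribute at most `lam * tr M ≤ lam * n`. The at most
`r` larger ones contribute at most `⟨P, M⟩ ≤ ‖P‖_F ‖M‖_F ≤ √r ‖M‖_F`, where `P` is the orthogonal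
projection onto their eigenvectors (`spectral_bound`).
-/

-- `prEvent w E` is the probability of the event `E` under the finitely supported
-- probability distribution given by the weight function `w`.
open scoped Classical in
noncomputable def prEvent {Ω : Type*} [Fintype Ω] (w : Ω → ℝ) (E : Ω → Prop) : ℝ :=
  ∑ ω ∈ Finset.univ.filter E, w ω

/-- The Kullback–Leibler divergence `D_KL(p ‖ q)` between two finitely supported
distributions given by mass functions `p` and `q` (with the usual convention
`0 · log(0/q) = 0`, which is what the formula below yields since `log 0 = 0`
in Lean). -/
noncomputable def klDivFin {β : Type*} [Fintype β] (p q : β → ℝ) : ℝ :=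
  ∑ x, p x * Real.log (p x / q x)

/-! ### A scalar lower bound for relative entropy -/

/-- The summand of `D_KL(p ‖ q)` exceeds `p - q` by at least `(p - q)² / 2` for masses in `[0, 1]`,
because `t ↦ t log t` has second derivative at least `1` on `(0, 1]`. -/
theorem kl_term_lower {p q : ℝ} (hp : 0 ≤ p) (hp1 : p ≤ 1) (hq : 0 ≤ q) (hq1 : q ≤ 1)
    (hpq : q = 0 → p = 0) : p - q + (p - q) ^ 2 / 2 ≤ p * Real.log (p / q) := by
  rcases hq.eq_or_lt with rfl | hq0
  · simp [hpq rfl]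
  rcases hp.eq_or_lt with rfl | hp0
  · simp only [zero_mul, zero_sub]; nlinarith
  rcases le_total q p with h | h
  -- For `q ≤ p`, the bound `2 x / (x + 2) ≤ log (1 + x)` is applied at `x = p / q - 1`.
  · have h1 := Real.le_log_one_add_of_nonneg (x := p / q - 1)
      (by rw [sub_nonneg, one_le_div hq0]; exact h)
    rw [show 1 + (p / q - 1) = p / q by ring] at h1
    refine le_trans ?_ (mul_le_mul_of_nonneg_left h1 hp)
    have e : p * (2 * (p / q - 1) / (p / q - 1 + 2)) = (p - q) + (p - q) ^ 2 / (p + q) := by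
      have : p / q - 1 + 2 ≠ 0 := by
        have : 0 < p / q := by positivity
        linarith
      field_simp
      ring
    rw [e]
    gcongr
    linarith
  -- For `p ≤ q`, `t ≤ sinh t` at `t = log (q / p)` gives `log x ≤ (x - 1/x) / 2` at `x = q / p`.
  · have h1 := Real.self_le_sinh_iff.2 (Real.log_nonneg ((one_le_div hp0).2 h))
    rw [Real.sinh_log (by positivity)] at h1
    have e : Real.log (p / q) = - Real.log (q / p) := by
      rw [← Real.log_inv, inv_div]
    rw [e, mul_neg]
    have h2 := mul_le_mul_of_nonneg_left h1 hp
    have e2 : p * ((q / p - (q / p)⁻¹) / 2) = (q - p) - (q - p) ^ 2 / (2 * q) := by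
      field_simp
      ring
    rw [e2] at h2
    have : (q - p) ^ 2 / 2 ≤ (q - p) ^ 2 / (2 * q) := by
      gcongr
      linarith
    nlinarith

/-! ### Spectral estimates -/

/-- If `W` has an orthonormal eigenbasis `b` with eigenvalues `l ≤ 1`, at most `r` of which exceed
`lam`, and `M` is positive semidefinite, then `⟨W, M⟩ ≤ √r ‖M‖_F + lam * tr M`. -/
theorem spectral_bound {ι : Type*} [Fintype ι] [DecidableEq ι] {r : ℕ} {lam : ℝ}
    (hlam : 0 ≤ lam) (W M b : ι → ι → ℝ) (l : ι → ℝ)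
    (hrow : ∀ i j, ∑ u, b i u * b j u = if i = j then 1 else 0)
    (hcol : ∀ u v, ∑ i, b i u * b i v = if u = v then 1 else 0)
    (heig : ∀ i u, ∑ v, W u v * b i v = l i * b i u)
    (hl : ∀ i, l i ≤ 1)
    (hr : (Finset.univ.filter fun i => lam < l i).card ≤ r)
    (hM : ∀ a : ι → ℝ, 0 ≤ ∑ u, ∑ v, a u * a v * M u v) :
    ∑ u, ∑ v, W u v * M u v ≤
      √(r * ∑ u, ∑ v, M u v ^ 2) + lam * ∑ u, M u u := by
  set S := Finset.univ.filter fun i => lam < l i with hS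
  set m : ι → ℝ := fun i => ∑ u, ∑ v, b i u * b i v * M u v with hm
  have hW : ∀ u v, W u v = ∑ i, l i * b i u * b i v := by
    intro u v
    simp_rw [← heig, Finset.sum_mul]
    rw [Finset.sum_comm]
    simp_rw [mul_assoc, ← Finset.mul_sum, hcol]
    simp
  have h1 : ∑ u, ∑ v, W u v * M u v = ∑ i, l i * m i := by
    simp_rw [hW, hm, Finset.sum_mul, Finset.mul_sum]
    rw [Finset.sum_comm_cycle]
    simp only [mul_assoc]
  have h2 : ∑ i, m i = ∑ u, M u u := by
    simp_rw [hm]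
    rw [← Finset.sum_comm_cycle]
    simp_rw [← Finset.sum_mul, hcol]
    simp
  -- `P` is the orthogonal projection onto the span of the eigenvectors with eigenvalue above `lam`.
  set P : ι → ι → ℝ := fun u v => ∑ i ∈ S, b i u * b i v with hP
  have h3 : ∑ i ∈ S, m i = ∑ u, ∑ v, P u v * M u v := by
    simp_rw [hm, hP, Finset.sum_mul]
    symm
    rw [Finset.sum_comm_cycle]
  have h4 : ∑ u, ∑ v, P u v ^ 2 = S.card := by
    have : ∀ u v, P u v ^ 2 = ∑ i ∈ S, ∑ j ∈ S, (b i u * b j u) * (b i v * b j v) := by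
      intro u v
      rw [hP, sq, Finset.sum_mul_sum]
      refine Finset.sum_congr rfl fun i _ => Finset.sum_congr rfl fun j _ => by ring
    simp_rw [this]
    rw [Finset.sum_comm_cycle]
    have : ∀ i ∈ S, ∑ u, ∑ v, ∑ j ∈ S, (b i u * b j u) * (b i v * b j v) = 1 := by
      intro i hi
      rw [Finset.sum_comm_cycle]
      simp_rw [← Finset.mul_sum, ← Finset.sum_mul, hrow]
      simp [hi]
    rw [Finset.sum_congr rfl this]
    simp
  have h5 : ∑ i, l i * m i ≤ ∑ i ∈ S, m i + lam * ∑ i, m i := by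
    rw [hS, Finset.sum_filter, Finset.mul_sum, ← Finset.sum_add_distrib]
    refine Finset.sum_le_sum fun i _ => ?_
    have hmi : 0 ≤ m i := hM (b i)
    split_ifs with h
    · nlinarith [hl i, mul_nonneg hlam hmi]
    · rw [zero_add]; exact mul_le_mul_of_nonneg_right (not_lt.1 h) hmi
  have h6 : ∑ u, ∑ v, P u v * M u v ≤ √(r * ∑ u, ∑ v, M u v ^ 2) := by
    apply Real.le_sqrt_of_sq_le
    have := Finset.sum_mul_sq_le_sq_mul_sq (Finset.univ : Finset (ι × ι))
      (fun p => P p.1 p.2) (fun p => M p.1 p.2)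
    simp only [Fintype.sum_prod_type] at this
    rw [h4] at this
    refine this.trans ?_
    gcongr
  rw [h1]
  rw [h3, h2] at h5
  linarith

/-- Eigenvalues of the random walk matrix are at most `1`: by `2 aᵤ aᵥ ≤ aᵤ² + aᵥ²` and regularity,
`⟨a, A_G a⟩ ≤ d ‖a‖²`. -/
theorem eig_le_one {n d : ℕ} (hd : 0 < d) (G : SimpleGraph (Fin n)) [DecidableRel G.Adj]
    (hreg : G.IsRegularOfDegree d) (a : Fin n → ℝ) (l : ℝ) (ha : ∑ u, a u * a u = 1)
    (heig : ∀ u, ∑ v, ((d : ℝ)⁻¹ • G.adjMatrix ℝ) u v * a v = l * a u) : l ≤ 1 := by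
  have hd' : (0 : ℝ) < d := by exact_mod_cast hd
  have hdeg : ∀ u, ∑ v, G.adjMatrix ℝ u v = d := by
    intro u
    have := hreg u
    rw [← G.card_neighborFinset_eq_degree, G.neighborFinset_eq_filter] at this
    simp [SimpleGraph.adjMatrix_apply, this]
  have hdeg' : ∀ v, ∑ u, G.adjMatrix ℝ u v = d := by
    intro v
    rw [← hdeg v]
    simp [SimpleGraph.adjMatrix_apply, G.adj_comm]
  have h1 : l = ∑ u, a u * ∑ v, ((d : ℝ)⁻¹ • G.adjMatrix ℝ) u v * a v := by
    simp_rw [heig, mul_left_comm _ l, ← Finset.mul_sum, ha, mul_one]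
  have h2 : ∑ u, ∑ v, G.adjMatrix ℝ u v * (a u * a v) ≤
      ∑ u, ∑ v, G.adjMatrix ℝ u v * ((a u * a u + a v * a v) / 2) := by
    refine Finset.sum_le_sum fun u _ => Finset.sum_le_sum fun v _ => ?_
    apply mul_le_mul_of_nonneg_left
    · nlinarith [sq_nonneg (a u - a v)]
    · rw [SimpleGraph.adjMatrix_apply]; split_ifs <;> simp
  have h3 : ∑ u, ∑ v, G.adjMatrix ℝ u v * ((a u * a u + a v * a v) / 2) = d := by
    have e : ∀ u v, G.adjMatrix ℝ u v * ((a u * a u + a v * a v) / 2) =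
      G.adjMatrix ℝ u v * (a u * a u / 2) + G.adjMatrix ℝ u v * (a v * a v / 2) := by
      intros; ring
    simp_rw [e, Finset.sum_add_distrib]
    rw [Finset.sum_comm (f := fun u v => G.adjMatrix ℝ u v * (a v * a v / 2))]
    simp_rw [← Finset.sum_mul, hdeg, hdeg', ← Finset.mul_sum, ← Finset.sum_div, ha]
    ring
  have h4 : l = (d : ℝ)⁻¹ * ∑ u, ∑ v, G.adjMatrix ℝ u v * (a u * a v) := by
    rw [h1]
    simp_rw [Finset.mul_sum]
    refine Finset.sum_congr rfl fun u _ => Finset.sum_congr rfl fun v _ => ?_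
    simp only [Matrix.smul_apply, smul_eq_mul]
    ring
  rw [h4, inv_mul_le_one₀ hd']
  linarith

/-! ### Covariances of indicator variables -/

section Probability

variable {Ω : Type*} [Fintype Ω] {w : Ω → ℝ}

open scoped Classical in
theorem prEvent_eq_sum (E : Ω → Prop) : prEvent w E = ∑ x, w x * if E x then 1 else 0 := by
  simp [prEvent, Finset.sum_filter]

theorem prEvent_nonneg (hw : ∀ x, 0 ≤ w x) (E : Ω → Prop) : 0 ≤ prEvent w E :=
  Finset.sum_nonneg fun x _ => hw x

theorem prEvent_mono (hw : ∀ x, 0 ≤ w x) {E F : Ω → Prop} (h : ∀ x, E x → F x) :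
    prEvent w E ≤ prEvent w F := by
  classical
  refine Finset.sum_le_sum_of_subset_of_nonneg (fun x hx => ?_) fun x _ _ => hw x
  simp only [Finset.mem_filter, Finset.mem_univ, true_and] at hx ⊢
  exact h x hx

theorem prEvent_le_one (hw : ∀ x, 0 ≤ w x) (hw1 : ∑ x, w x = 1) (E : Ω → Prop) :
    prEvent w E ≤ 1 := by
  refine (prEvent_mono hw (F := fun _ => True) fun _ _ => trivial).trans_eq ?_
  simpa [prEvent] using hw1

theorem sum_prEvent_eq {β : Type*} [Fintype β] (hw1 : ∑ x, w x = 1) (X : Ω → β) :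
    ∑ b, prEvent w (fun x => X x = b) = 1 := by
  classical
  simp_rw [prEvent_eq_sum]
  rw [Finset.sum_comm]
  simp [hw1]

theorem cov_eq_sum (hw1 : ∑ x, w x = 1) (E F : Ω → Prop) [DecidablePred E] [DecidablePred F] :
    prEvent w (fun x => E x ∧ F x) - prEvent w E * prEvent w F =
      ∑ x, w x * (((if E x then 1 else 0) - prEvent w E) *
        ((if F x then 1 else 0) - prEvent w F)) := by
  have hE : ∑ x, w x * (if E x then (1 : ℝ) else 0) = prEvent w E := by
    rw [prEvent_eq_sum]
    refine Finset.sum_congr rfl fun x _ => by congr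
  have hF : ∑ x, w x * (if F x then (1 : ℝ) else 0) = prEvent w F := by
    rw [prEvent_eq_sum]
    refine Finset.sum_congr rfl fun x _ => by congr
  have hEF : ∑ x, w x * ((if E x then (1 : ℝ) else 0) * (if F x then 1 else 0)) =
      prEvent w (fun x => E x ∧ F x) := by
    rw [prEvent_eq_sum]
    refine Finset.sum_congr rfl fun x _ => ?_
    by_cases h1 : E x <;> by_cases h2 : F x <;> simp [h1, h2]
  have key : ∀ x, w x * (((if E x then (1 : ℝ) else 0) - prEvent w E) *
        ((if F x then 1 else 0) - prEvent w F)) =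
      w x * ((if E x then (1 : ℝ) else 0) * (if F x then 1 else 0))
      - prEvent w F * (w x * (if E x then (1 : ℝ) else 0))
      - prEvent w E * (w x * (if F x then (1 : ℝ) else 0))
      + prEvent w E * prEvent w F * w x := fun x => by ring
  simp_rw [key, Finset.sum_add_distrib, Finset.sum_sub_distrib, ← Finset.mul_sum, hE, hF, hEF, hw1]
  ring

/-- The entrywise square of the covariance matrix of indicators is positive semidefinite. With `fᵤ`
the centred indicator of `E u`, the quadratic form at `a` equals
`∑ₓ ∑ᵧ w(x) w(y) (∑ᵤ aᵤ fᵤ(x) fᵤ(y))²`. -/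
theorem sq_cov_quadForm_nonneg {ι : Type*} [Fintype ι] (hw : ∀ x, 0 ≤ w x)
    (hw1 : ∑ x, w x = 1) (E : ι → Ω → Prop) (a : ι → ℝ) :
    0 ≤ ∑ u, ∑ v, a u * a v *
      (prEvent w (fun x => E u x ∧ E v x) - prEvent w (E u) * prEvent w (E v)) ^ 2 := by
  classical
  set f : ι → Ω → ℝ := fun u x => (if E u x then 1 else 0) - prEvent w (E u) with hf
  have h : ∀ u v, a u * a v *
      (prEvent w (fun x => E u x ∧ E v x) - prEvent w (E u) * prEvent w (E v)) ^ 2 =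
      ∑ x, ∑ y, w x * w y * ((a u * (f u x * f u y)) * (a v * (f v x * f v y))) := by
    intro u v
    rw [cov_eq_sum hw1, sq, Finset.sum_mul_sum, Finset.mul_sum]
    refine Finset.sum_congr rfl fun x _ => ?_
    rw [Finset.mul_sum]
    refine Finset.sum_congr rfl fun y _ => ?_
    simp only [hf]
    ring
  have h2 : ∑ u, ∑ v, a u * a v *
      (prEvent w (fun x => E u x ∧ E v x) - prEvent w (E u) * prEvent w (E v)) ^ 2 =
      ∑ x, ∑ y, w x * w y * (∑ u, a u * (f u x * f u y)) ^ 2 := by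
    simp_rw [h, sq, Finset.sum_mul_sum, Finset.mul_sum]
    rw [Finset.sum_comm_cycle]
    refine Finset.sum_congr rfl fun x _ => ?_
    rw [Finset.sum_comm_cycle]
  rw [h2]
  exact Finset.sum_nonneg fun x _ => Finset.sum_nonneg fun y _ =>
    mul_nonneg (mul_nonneg (hw x) (hw y)) (sq_nonneg _)

theorem sum_sq_cov_le_one {α : Type*} [Fintype α] (hw : ∀ x, 0 ≤ w x)
    (hw1 : ∑ x, w x = 1) (X Y : Ω → α) :
    ∑ σ, (prEvent w (fun x => X x = σ ∧ Y x = σ) -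
      prEvent w (fun x => X x = σ) * prEvent w (fun x => Y x = σ)) ^ 2 ≤ 1 := by
  rw [← sum_prEvent_eq hw1 X]
  refine Finset.sum_le_sum fun σ _ => ?_
  have h1 := prEvent_nonneg hw (fun x => X x = σ ∧ Y x = σ)
  have h2 := prEvent_mono hw (E := fun x => X x = σ ∧ Y x = σ) (F := fun x => X x = σ)
    fun x h => h.1
  have h3 := prEvent_nonneg hw (fun x => X x = σ)
  have h4 := prEvent_nonneg hw (fun x => Y x = σ)
  have h5 := prEvent_le_one hw hw1 (fun x => X x = σ)
  have h6 := prEvent_le_one hw hw1 (fun x => Y x = σ)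
  generalize prEvent w (fun x => X x = σ ∧ Y x = σ) = c at *
  generalize prEvent w (fun x => X x = σ) = p at *
  generalize prEvent w (fun x => Y x = σ) = q at *
  -- Both `c` and `p * q` lie in `[0, p]`, and `p² ≤ p`.
  have h7 : (c - p * q) ^ 2 ≤ p ^ 2 := by
    apply sq_le_sq'
    · nlinarith
    · nlinarith
  nlinarith

/-- The diagonal part of the squared `ℓ²` distance between the joint law and the product of the
marginals is at most twice their mutual information. -/
theorem sum_sq_cov_le_two_mul_klDivFin {α : Type*} [Fintype α] (hw : ∀ x, 0 ≤ w x)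
    (hw1 : ∑ x, w x = 1) (X Y : Ω → α) :
    ∑ σ, (prEvent w (fun x => X x = σ ∧ Y x = σ) -
      prEvent w (fun x => X x = σ) * prEvent w (fun x => Y x = σ)) ^ 2 ≤
    2 * klDivFin (fun p : α × α => prEvent w (fun x => X x = p.1 ∧ Y x = p.2))
      (fun p : α × α => prEvent w (fun x => X x = p.1) * prEvent w (fun x => Y x = p.2)) := by
  set P : α × α → ℝ := fun p => prEvent w (fun x => X x = p.1 ∧ Y x = p.2) with hP
  set Q : α × α → ℝ :=
    fun p => prEvent w (fun x => X x = p.1) * prEvent w (fun x => Y x = p.2) with hQ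
  have hsP : ∑ p, P p = 1 := by
    rw [← sum_prEvent_eq hw1 (fun x => (X x, Y x))]
    simp [hP, Prod.ext_iff]
  have hsQ : ∑ p, Q p = 1 := by
    simp_rw [hQ, Fintype.sum_prod_type, ← Finset.mul_sum, ← Finset.sum_mul, sum_prEvent_eq hw1]
    norm_num
  have h1 : ∑ σ, (P (σ, σ) - Q (σ, σ)) ^ 2 ≤ ∑ p, (P p - Q p) ^ 2 := by
    rw [Fintype.sum_prod_type]
    exact Finset.sum_le_sum fun σ _ =>
      Finset.single_le_sum (f := fun τ => (P (σ, τ) - Q (σ, τ)) ^ 2)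
        (fun τ _ => sq_nonneg _) (Finset.mem_univ σ)
  have h2 : ∑ p, (P p - Q p + (P p - Q p) ^ 2 / 2) ≤ klDivFin P Q := by
    refine Finset.sum_le_sum fun p _ => kl_term_lower (prEvent_nonneg hw _)
      (prEvent_le_one hw hw1 _) (mul_nonneg (prEvent_nonneg hw _) (prEvent_nonneg hw _))
      (mul_le_one₀ (prEvent_le_one hw hw1 _) (prEvent_nonneg hw _) (prEvent_le_one hw hw1 _)) ?_
    -- The joint law is absolutely continuous with respect to the product of the marginals.
    intro h
    refine le_antisymm ?_ (prEvent_nonneg hw _)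
    rcases mul_eq_zero.1 h with h | h
    · exact h ▸ prEvent_mono hw fun x hx => hx.1
    · exact h ▸ prEvent_mono hw fun x hx => hx.2
  rw [Finset.sum_add_distrib, Finset.sum_sub_distrib, hsP, hsQ, ← Finset.sum_div] at h2
  linarith

end Probability

/-! ### From global to local correlation -/

/-- **Local correlation from global correlation in low threshold rank graphs**
(Lemma 2.5). Let `G` be a `d`-regular graph on `n` vertices whose uniform random
walk matrix `(1/d)·A_G` has at most `r` eigenvalues (with multiplicity) larger
than `lam > 0`, and let `X = (X₁,…,Xₙ)` be a random vector over `Σⁿ` (given by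
the weight function `w` on `Fin n → Σ`) whose global correlation
`E_{u,v∼[n]}[D_KL(law(Xᵤ,Xᵥ) ‖ law(Xᵤ) ⊗ law(Xᵥ))]` is at most `δ`. Then the
local correlation
`E_{(u,v)∼G}[∑_σ (Pr[Xᵤ = Xᵥ = σ] − Pr[Xᵤ = σ]·Pr[Xᵥ = σ])²]` is at most
`√(2rδ) + lam`. -/
theorem local_correlation_le_of_global_correlation_le
    {n d r : ℕ} (hd : 0 < d) (lam : ℝ) (hlam : 0 < lam) (δ : ℝ)
    (G : SimpleGraph (Fin n)) [DecidableRel G.Adj] (hreg : G.IsRegularOfDegree d)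
    (hW : (((d : ℝ)⁻¹) • G.adjMatrix ℝ).IsHermitian)
    (hthreshold : (Finset.univ.filter fun i => lam < hW.eigenvalues i).card ≤ r)
    {α : Type*} [Fintype α]
    (w : (Fin n → α) → ℝ) (hw : ∀ x, 0 ≤ w x) (hw1 : ∑ x, w x = 1)
    (hglobal : (1 / (n : ℝ) ^ 2) *
        ∑ u, ∑ v, klDivFin (fun p : α × α => prEvent w (fun x => x u = p.1 ∧ x v = p.2))
          (fun p : α × α => prEvent w (fun x => x u = p.1) * prEvent w (fun x => x v = p.2))
      ≤ δ) :
    (1 / ((n : ℝ) * d)) * ∑ u, ∑ v,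
        (if G.Adj u v then
          ∑ σ : α, (prEvent w (fun x => x u = σ ∧ x v = σ) -
              prEvent w (fun x => x u = σ) * prEvent w (fun x => x v = σ)) ^ 2
        else 0) ≤
      Real.sqrt (2 * r * δ) + lam := by
  -- With no vertices the left side is `0`, since `1 / 0 = 0`.
  rcases Nat.eq_zero_or_pos n with rfl | hn
  · simp only [Finset.univ_eq_empty, Finset.sum_empty, mul_zero]
    positivity
  have hn' : (0 : ℝ) < n := by exact_mod_cast hn
  have hd' : (0 : ℝ) < d := by exact_mod_cast hd
  set M : Fin n → Fin n → ℝ := fun u v =>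
    ∑ σ : α, (prEvent w (fun x => x u = σ ∧ x v = σ) -
      prEvent w (fun x => x u = σ) * prEvent w (fun x => x v = σ)) ^ 2 with hM
  have hM1 : ∀ u v, M u v ≤ 1 := fun u v =>
    sum_sq_cov_le_one hw hw1 (fun x => x u) (fun x => x v)
  have hM0 : ∀ u v, 0 ≤ M u v := fun u v => Finset.sum_nonneg fun σ _ => sq_nonneg _
  have hMpsd : ∀ a : Fin n → ℝ, 0 ≤ ∑ u, ∑ v, a u * a v * M u v := by
    intro a
    simp_rw [hM, Finset.mul_sum]
    rw [Finset.sum_comm_cycle]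
    exact Finset.sum_nonneg fun σ _ =>
      sq_cov_quadForm_nonneg hw hw1 (fun u (x : Fin n → α) => x u = σ) a
  have hM2 : ∑ u, ∑ v, M u v ^ 2 ≤ 2 * δ * n ^ 2 := by
    rw [one_div, inv_mul_le_iff₀ (by positivity)] at hglobal
    calc ∑ u, ∑ v, M u v ^ 2 ≤ ∑ u, ∑ v, 2 * klDivFin
          (fun p : α × α => prEvent w (fun x => x u = p.1 ∧ x v = p.2))
          (fun p : α × α =>
            prEvent w (fun x => x u = p.1) * prEvent w (fun x => x v = p.2)) := by
          refine Finset.sum_le_sum fun u _ => Finset.sum_le_sum fun v _ => ?_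
          refine le_trans ?_
            (sum_sq_cov_le_two_mul_klDivFin hw hw1 (fun x => x u) (fun x => x v))
          exact pow_le_of_le_one (hM0 u v) (hM1 u v) two_ne_zero
      _ ≤ 2 * δ * n ^ 2 := by
          simp_rw [← Finset.mul_sum]
          linarith
  set b : Fin n → Fin n → ℝ := fun i u => hW.eigenvectorBasis i u with hb
  have hrow : ∀ i j, ∑ u, b i u * b j u = if i = j then 1 else 0 := by
    intro i j
    have := orthonormal_iff_ite.1 hW.eigenvectorBasis.orthonormal i j
    rw [← this, PiLp.inner_apply]
    simp [hb, mul_comm]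
  have hcol : ∀ u v, ∑ i, b i u * b i v = if u = v then 1 else 0 := by
    intro u v
    have := hW.eigenvectorBasis.sum_inner_mul_inner
      (EuclideanSpace.single u (1 : ℝ)) (EuclideanSpace.single v (1 : ℝ))
    simpa [hb, EuclideanSpace.inner_single_left, EuclideanSpace.inner_single_right,
      eq_comm] using this
  have heig : ∀ i u, ∑ v, ((d : ℝ)⁻¹ • G.adjMatrix ℝ) u v * b i v =
      hW.eigenvalues i * b i u := fun i u =>
    congrFun (hW.mulVec_eigenvectorBasis i) u
  have hle : ∀ i, hW.eigenvalues i ≤ 1 := fun i =>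
    eig_le_one hd G hreg (b i) _ (by simp [hrow]) (heig i)
  have key := spectral_bound hlam.le _ M b _ hrow hcol heig hle hthreshold hMpsd
  have htr : ∑ u, M u u ≤ n :=
    (Finset.sum_le_sum fun u _ => hM1 u u).trans_eq (by simp)
  have hsqrt : √(r * ∑ u, ∑ v, M u v ^ 2) ≤ √(2 * r * δ) * n := by
    rw [← Real.sqrt_sq hn'.le, ← Real.sqrt_mul' _ (sq_nonneg _)]
    refine Real.sqrt_le_sqrt ?_
    calc r * ∑ u, ∑ v, M u v ^ 2 ≤ r * (2 * δ * n ^ 2) := by gcongr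
      _ = 2 * r * δ * n ^ 2 := by ring
  have hlhs : ∑ u, ∑ v, (if G.Adj u v then M u v else 0) =
      d * ∑ u, ∑ v, ((d : ℝ)⁻¹ • G.adjMatrix ℝ) u v * M u v := by
    simp_rw [Finset.mul_sum]
    refine Finset.sum_congr rfl fun u _ => Finset.sum_congr rfl fun v _ => ?_
    rw [Matrix.smul_apply, SimpleGraph.adjMatrix_apply]
    split_ifs <;> simp [hd'.ne']
  change (1 / ((n : ℝ) * d)) * ∑ u, ∑ v, (if G.Adj u v then M u v else 0) ≤ _
  rw [hlhs, one_div, inv_mul_le_iff₀ (by positivity), mul_comm (n : ℝ), mul_assoc]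
  refine mul_le_mul_of_nonneg_left ?_ hd'.le
  nlinarith [mul_le_mul_of_nonneg_left htr hlam.le]
end

section
/- Let ε ∈ (0,1), δ ∈ (0,1), let G be a d-regular simple graph on n vertices (d > 0), and let X = (X₁,…,Xₙ) be a random vector with each Xᵤ taking values in {0,1}. Suppose: (i) for every edge (u,v) of G, Pr[Xᵤ = 1 ∧ Xᵥ = 1] = 0; (ii) Σ_{u∈[n]} Pr[Xᵤ = 1] ≥ (1/2 − δ)·n; and (iii) the local correlation bound (1/(n·d)) · Σ_{(u,v): u adjacent to v} Pr[Xᵤ = 1]² · Pr[Xᵥ = 1]² ≤ ε⁵/50 holds, where the sum is over ordered pairs of adjacent vertices. Let γ = ε/100 and define S = { u ∈ [n] : Pr[Xᵤ = 1] ≥ 1/2 + γ }. Then S is an independent set of G with |S| ≥ (1/2 − ε − 2δ)·n. -/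
open scoped Classical in
/-- Two events with null intersection have total probability at most one. -/
lemma prEvent_add_le_one {Ω : Type*} [Fintype Ω] {w : Ω → ℝ} (hw : ∀ ω, 0 ≤ w ω)
    (hw1 : ∑ ω, w ω = 1) (E F : Ω → Prop) (h : prEvent w (fun ω => E ω ∧ F ω) = 0) :
    prEvent w E + prEvent w F ≤ 1 := by
  have key : prEvent w E + prEvent w F ≤ ∑ ω, w ω + prEvent w (fun ω => E ω ∧ F ω) := by
    unfold prEvent
    simp only [Finset.sum_filter]
    rw [← Finset.sum_add_distrib, ← Finset.sum_add_distrib]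
    refine Finset.sum_le_sum fun ω _ => ?_
    have := hw ω
    by_cases hE : E ω <;> by_cases hF : F ω <;> simp [hE, hF, this]
  linarith

lemma sum_adj_fst {n d : ℕ} (G : SimpleGraph (Fin n)) [DecidableRel G.Adj]
    (hreg : G.IsRegularOfDegree d) (f : Fin n → ℝ) :
    ∑ u, ∑ v, (if G.Adj u v then f u else 0) = d * ∑ u, f u := by
  rw [Finset.mul_sum]
  refine Finset.sum_congr rfl fun u _ => ?_
  rw [← Finset.sum_filter, Finset.sum_const, nsmul_eq_mul, ← G.neighborFinset_eq_filter,
    G.card_neighborFinset_eq_degree, hreg u]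

lemma sum_adj_snd {n d : ℕ} (G : SimpleGraph (Fin n)) [DecidableRel G.Adj]
    (hreg : G.IsRegularOfDegree d) (f : Fin n → ℝ) :
    ∑ u, ∑ v, (if G.Adj u v then f v else 0) = d * ∑ u, f u := by
  rw [Finset.sum_comm, ← sum_adj_fst G hreg]
  simp only [G.adj_comm]

/-- Bound for an edge whose endpoint masses `a`, `b` both lie below the threshold `1/2 + ε/100`. -/
lemma low_edge_bound {ε a b : ℝ} (hε : 0 < ε) (ha : a ≤ 1/2 + ε/100)
    (hb : b ≤ 1/2 + ε/100) :
    a + b ≤ 1/2 + ε/100 + ε/2 + 2/ε * (a^2 * b^2) := by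
  set e := a + b - (1/2 + ε/100) with he
  have hq : 0 ≤ 2/ε * (a^2 * b^2) := by positivity
  rcases le_or_gt e 0 with h | h
  · linarith
  -- `a * b = (1/2 + γ) * e + (1/2 + γ - a) * (1/2 + γ - b)`
  have hab : e / 2 ≤ a * b := by
    have h1 := mul_nonneg (sub_nonneg.2 ha) (sub_nonneg.2 hb)
    have h2 := mul_pos hε h
    rw [he] at h2 ⊢
    nlinarith
  have hsq : (e/2)^2 ≤ a^2 * b^2 := by
    rw [← mul_pow]
    gcongr
  have h3 : 2/ε * (e/2)^2 ≤ 2/ε * (a^2 * b^2) := by gcongr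
  have h4 : e ≤ ε/2 + 2/ε * (e/2)^2 := by
    have h5 : ε/2 + 2/ε * (e/2)^2 - e = (e - ε)^2 / (2*ε) := by
      field_simp
      ring
    have h6 : 0 ≤ (e - ε)^2 / (2*ε) := by positivity
    linarith
  linarith

/-- Pointwise inequality on an edge with endpoint masses `a`, `b`; the two conditionals are
the indicators of the endpoints lying in the threshold set. -/
lemma edge_bound {ε a b : ℝ} (hε : 0 < ε) (hab : a + b ≤ 1) :
    a + b ≤ (1/2) * (if 1/2 + ε/100 ≤ a then (1:ℝ) else 0)
      + (1/2) * (if 1/2 + ε/100 ≤ b then (1:ℝ) else 0)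
      + (1/2 + ε/100 + ε/2) + 2/ε * (a^2 * b^2) := by
  have hq : 0 ≤ 2/ε * (a^2 * b^2) := by positivity
  split_ifs with h1 h2 h2
  · linarith
  · linarith
  · linarith
  · have := low_edge_bound hε (not_le.1 h1).le (not_le.1 h2).le
    linarith

open scoped Classical in
/-- **Core of the main independent-set theorem.**
Let `G` be a `d`-regular simple graph on `n` vertices and `X = (X₁,…,Xₙ)` a
random vector (given by the weights `w` on a finite sample space `Ω`) with
values in `{0,1}ⁿ`, modeled as `Fin n → Fin 2`. Assume: (i) for every edge
`(u,v)`, `Pr[Xᵤ = 1 ∧ Xᵥ = 1] = 0`; (ii) `∑ᵤ Pr[Xᵤ = 1] ≥ (1/2 − δ)·n`; and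
(iii) the local correlation bound
`E_{(u,v)∼G}[Pr[Xᵤ = 1]²·Pr[Xᵥ = 1]²] ≤ ε⁵/50`. Then, with `γ = ε/100`, the set
`S = {u : Pr[Xᵤ = 1] ≥ 1/2 + γ}` is an independent set of `G` of size at least
`(1/2 − ε − 2δ)·n`. -/
theorem independent_set_from_low_local_correlation
    {n d : ℕ} (hd : 0 < d) (ε δ : ℝ)
    (hε : ε ∈ Set.Ioo (0 : ℝ) 1) (hδ : δ ∈ Set.Ioo (0 : ℝ) 1)
    (G : SimpleGraph (Fin n)) [DecidableRel G.Adj] (hreg : G.IsRegularOfDegree d)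
    {Ω : Type*} [Fintype Ω] (w : Ω → ℝ)
    (hw : ∀ ω, 0 ≤ w ω) (hw1 : ∑ ω, w ω = 1)
    (X : Ω → Fin n → Fin 2)
    (hedge : ∀ u v, G.Adj u v → prEvent w (fun ω => X ω u = 1 ∧ X ω v = 1) = 0)
    (hsize : (1/2 - δ) * n ≤ ∑ u, prEvent w (fun ω => X ω u = 1))
    (hlocal : (1 / ((n : ℝ) * d)) * ∑ u, ∑ v,
        (if G.Adj u v then
          prEvent w (fun ω => X ω u = 1) ^ 2 * prEvent w (fun ω => X ω v = 1) ^ 2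
        else 0) ≤ ε ^ 5 / 50)
    (S : Finset (Fin n))
    (hS : S = Finset.univ.filter fun u => 1/2 + ε/100 ≤ prEvent w (fun ω => X ω u = 1)) :
    (∀ u ∈ S, ∀ v ∈ S, ¬ G.Adj u v) ∧ (1/2 - ε - 2 * δ) * n ≤ (S.card : ℝ) := by
  set p : Fin n → ℝ := fun u => prEvent w (fun ω => X ω u = 1) with hp
  obtain ⟨hε0, hε1⟩ := hε
  have hle : ∀ u v, G.Adj u v → p u + p v ≤ 1 := fun u v h =>
    prEvent_add_le_one hw hw1 _ _ (hedge u v h)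
  change (1/2 - δ) * n ≤ ∑ u, p u at hsize
  change (1 / ((n : ℝ) * d)) * ∑ u, ∑ v, (if G.Adj u v then p u ^ 2 * p v ^ 2 else 0)
    ≤ ε ^ 5 / 50 at hlocal
  change S = Finset.univ.filter fun u => 1/2 + ε/100 ≤ p u at hS
  refine ⟨fun u hu v hv huv => ?_, ?_⟩
  · simp only [hS, Finset.mem_filter, Finset.mem_univ, true_and] at hu hv
    linarith [hle u v huv]
  rcases Nat.eq_zero_or_pos n with hn | hn
  · subst hn
    simp
  have hn' : (0:ℝ) < n := by exact_mod_cast hn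
  have hd' : (0:ℝ) < d := by exact_mod_cast hd
  set Q := ∑ u, ∑ v, (if G.Adj u v then p u ^ 2 * p v ^ 2 else 0) with hQ
  have hQle : Q ≤ ε ^ 5 / 50 * (n * d) := by
    rwa [one_div, inv_mul_le_iff₀ (by positivity), mul_comm] at hlocal
  let s : Fin n → ℝ := fun u => if 1/2 + ε/100 ≤ p u then 1 else 0
  have hs : ∑ u, s u = S.card := by
    simp [s, hS]
  have hsum : ∑ u, ∑ v, ((if G.Adj u v then p u else 0) + (if G.Adj u v then p v else 0)) ≤
      ∑ u, ∑ v, ((1/2) * (if G.Adj u v then s u else 0) + (1/2) * (if G.Adj u v then s v else 0)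
        + (if G.Adj u v then (1/2 + ε/100 + ε/2) else 0)
        + 2/ε * (if G.Adj u v then p u ^ 2 * p v ^ 2 else 0)) := by
    refine Finset.sum_le_sum fun u _ => Finset.sum_le_sum fun v _ => ?_
    by_cases h : G.Adj u v
    · simpa only [h, if_true] using edge_bound hε0 (hle u v h)
    · simp [h]
  have hconst := sum_adj_fst G hreg (fun _ => 1/2 + ε/100 + ε/2)
  simp only [Finset.sum_add_distrib, ← Finset.mul_sum] at hsum
  rw [sum_adj_fst G hreg p, sum_adj_snd G hreg p, sum_adj_fst G hreg s, sum_adj_snd G hreg s,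
    hconst, ← hQ, hs, Finset.sum_const, Finset.card_univ, Fintype.card_fin, nsmul_eq_mul] at hsum
  have hQ2 : 2/ε * Q ≤ d * (ε ^ 4 / 25 * n) := by
    calc 2/ε * Q ≤ 2/ε * (ε ^ 5 / 50 * (n * d)) := by gcongr
      _ = d * (ε ^ 4 / 25 * n) := by
        field_simp
        ring
  have hfin : (d:ℝ) * (2 * ∑ u, p u) ≤
      d * (S.card + n * (1/2 + ε/100 + ε/2) + ε ^ 4 / 25 * n) := by linarith
  have hfin' := le_of_mul_le_mul_left hfin hd'
  have hε4 : ε ^ 4 * n ≤ ε * n := by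
    gcongr
    exact pow_le_of_le_one hε0.le hε1.le (by norm_num)
  have hεn : 0 < ε * n := by positivity
  linarith
end
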